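/- arXiv:1902.01751 — 5 statements merged into one kernel-verified Lean document; each statement's English description precedes it below -/
import Mathlib

section
/- Let a = (a₁,a₂,a₃) be a triple of positive integers and let C, D be 3×3 matrices with non-negative integer entries such that B_a = C·D and (a₁,a₂,a₃) = (1,1,1)·D. Define ǎ_i = Σ_{j=1}^{3} d_{ij} (the i-th row sum of D) and ȟ = 1 + ǎ₁ + ǎ₂ + ǎ₃. Then ȟ = a₁ + a₂ + a₃ + 1 and C·(ǎ₁,ǎ₂,ǎ₃)ᵀ = (ȟ,ȟ,ȟ)ᵀ; consequently, for every t ∈ ℂ, the polynomial f_C(x,y,z) + w^{ȟ} − t·xyzw is weighted homogeneous of degree ȟ with respect to the weights (ǎ₁,ǎ₂,ǎ₃,1) on (x,y,z,w), i.e., f_C(λ^{ǎ₁}x, λ^{ǎ₂}y, λ^{ǎ₃}z) + (λw)^{ȟ} − t·(λ^{ǎ₁}x)(λ^{ǎ₂}y)(λ^{ǎ₃}z)(λw) = λ^{ȟ}(f_C(x,y,z) + w^{ȟ} − t·xyzw) for all λ ∈ ℂ. -/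
open Matrix BigOperators

noncomputable section

/-- `f_C(x,y,z) = Σ_{i=1}^{3} x^{c_{i1}} y^{c_{i2}} z^{c_{i3}}` for a 3×3 matrix `C`
with non-negative integer entries. -/
def fC (C : Matrix (Fin 3) (Fin 3) ℕ) : (Fin 3 → ℂ) → ℂ :=
  fun v => ∑ i : Fin 3, ∏ j : Fin 3, v j ^ C i j

/-- `φ_D(u₁,u₂,u₃) = (u₁^{d_{i1}} u₂^{d_{i2}} u₃^{d_{i3}})_{i=1}^{3}`. -/
def phiD (D : Matrix (Fin 3) (Fin 3) ℕ) : (Fin 3 → ℂ) → (Fin 3 → ℂ) :=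
  fun u i => ∏ j : Fin 3, u j ^ D i j

/-- The matrix `B_a` with rows `(a₁+1,a₂,a₃)`, `(a₁,a₂+1,a₃)`, `(a₁,a₂,a₃+1)`. -/
def Bmat (a : Fin 3 → ℕ) : Matrix (Fin 3) (Fin 3) ℕ :=
  fun i j => a j + if i = j then 1 else 0

/-- `G_a(u₁,u₂,u₃) = u₁^{a₁+1}u₂^{a₂}u₃^{a₃} + u₁^{a₁}u₂^{a₂+1}u₃^{a₃} + u₁^{a₁}u₂^{a₂}u₃^{a₃+1}`. -/
def Ga (a : Fin 3 → ℕ) : (Fin 3 → ℂ) → ℂ :=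
  fun u => u 0 ^ (a 0 + 1) * u 1 ^ a 1 * u 2 ^ a 2
         + u 0 ^ a 0 * u 1 ^ (a 1 + 1) * u 2 ^ a 2
         + u 0 ^ a 0 * u 1 ^ a 1 * u 2 ^ (a 2 + 1)

/-- `H_a(u₁,u₂,u₃) = u₁^{a₁}u₂^{a₂}u₃^{a₃}`. -/
def Ha (a : Fin 3 → ℕ) : (Fin 3 → ℂ) → ℂ :=
  fun u => u 0 ^ a 0 * u 1 ^ a 1 * u 2 ^ a 2

/-- Determinant of a matrix of natural numbers, computed over `ℤ`. -/
def detZ (M : Matrix (Fin 3) (Fin 3) ℕ) : ℤ :=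
  (M.map (fun n : ℕ => (n : ℤ))).det

/-- `f` has an isolated critical point at the origin of `ℂ³`: the derivative of `f`
vanishes at `0`, and there is a punctured neighborhood of `0` containing no critical
point of `f`. -/
def IsolatedCriticalAtZero (f : (Fin 3 → ℂ) → ℂ) : Prop :=
  fderiv ℂ f 0 = 0 ∧
  ∃ ε : ℝ, ε > 0 ∧ ∀ p : Fin 3 → ℂ, p ≠ 0 → ‖p‖ < ε → fderiv ℂ f p ≠ 0

/-!
Since `B_a = C * D`, applying `C` to the vector `D *ᵥ 1` of row sums of `D` gives the row sums of
`B_a`, which are all equal to `∑ j, a j + 1`. Summing the entries of `D` by rows or by columns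
identifies this number with `ȟ`. So with the row sums of `D` as weights every monomial of `f_C` has
weight `ȟ`, and so do `w ^ ȟ` and, by the definition of `ȟ`, the product of all the variables.
-/

lemma replicateRow_add_one_mulVec_one {ι S : Type*} [Fintype ι] [DecidableEq ι]
    [NonAssocSemiring S] (a : ι → S) :
    (replicateRow ι a + 1) *ᵥ 1 = fun _ ↦ ∑ j, a j + 1 := by
  rw [add_mulVec, one_mulVec]
  ext i
  simp only [Pi.add_apply, Pi.one_apply, mulVec, dotProduct_one, replicateRow_apply]

section WeightedScaling

variable {ι κ R : Type*} [Fintype κ]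

lemma prod_pow_mul_pow [CommMonoid R] (q e : κ → ℕ) (lam : R) (v : κ → R) :
    ∏ j, (lam ^ q j * v j) ^ e j = lam ^ (e ⬝ᵥ q) * ∏ j, v j ^ e j := by
  simp only [mul_pow, Finset.prod_mul_distrib, ← pow_mul, Finset.prod_pow_eq_pow_sum,
    dotProduct, mul_comm (e _)]

variable [Fintype ι]

/-- The polynomial function `f_C` for an exponent matrix `C` with any number of rows (monomials) and
columns (variables), over any commutative semiring. -/
def monomialSum [CommSemiring R] (C : Matrix ι κ ℕ) (v : κ → R) : R :=
  ∑ i, ∏ j, v j ^ C i j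

lemma monomialSum_pow_mul [CommSemiring R] {C : Matrix ι κ ℕ} {q : κ → ℕ} {d : ℕ}
    (hC : C *ᵥ q = fun _ ↦ d) (lam : R) (v : κ → R) :
    monomialSum C (fun j ↦ lam ^ q j * v j) = lam ^ d * monomialSum C v := by
  have row_weight (i : ι) : C i ⬝ᵥ q = d := congrFun hC i
  simp only [monomialSum, prod_pow_mul_pow, row_weight, Finset.mul_sum]

lemma monomialSum_add_pow_sub_prod_pow_mul [CommRing R] {C : Matrix ι κ ℕ} {q : κ → ℕ} {d : ℕ}
    (hC : C *ᵥ q = fun _ ↦ d) (hd : d = 1 + ∑ j, q j) (t lam : R) (v : κ → R) (w : R) :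
    monomialSum C (fun j ↦ lam ^ q j * v j) + (lam * w) ^ d
        - t * ((∏ j, lam ^ q j * v j) * (lam * w))
      = lam ^ d * (monomialSum C v + w ^ d - t * ((∏ j, v j) * w)) := by
  have prod_scale : (∏ j, lam ^ q j * v j) * (lam * w) = lam ^ d * ((∏ j, v j) * w) := by
    rw [Finset.prod_mul_distrib, Finset.prod_pow_eq_pow_sum, hd, pow_add]
    ring
  rw [monomialSum_pow_mul hC, mul_pow, prod_scale]
  ring

end WeightedScaling

theorem stmt_5_general {ι κ R : Type*} [Fintype ι] [DecidableEq ι] [Fintype κ] [CommRing R]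
    {a : ι → ℕ} {C : Matrix ι κ ℕ} {D : Matrix κ ι ℕ}
    (hB : replicateRow ι a + 1 = C * D) (hcol : ∀ j, ∑ i, D i j = a j)
    {q : κ → ℕ} (hq : ∀ i, q i = ∑ j, D i j) {h : ℕ} (hh : h = 1 + ∑ i, q i) :
    h = ∑ j, a j + 1 ∧
    (C *ᵥ q = fun _ ↦ h) ∧
    ∀ (t lam : R) (v : κ → R) (w : R),
      monomialSum C (fun j ↦ lam ^ q j * v j) + (lam * w) ^ h
        - t * ((∏ j, lam ^ q j * v j) * (lam * w))
      = lam ^ h * (monomialSum C v + w ^ h - t * ((∏ j, v j) * w)) := by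
  have degree_eq : h = ∑ j, a j + 1 := by
    simp only [hh, hq, ← hcol]
    rw [Finset.sum_comm, add_comm]
  have q_eq : q = D *ᵥ 1 := funext fun i ↦ (hq i).trans (dotProduct_one _).symm
  have weights : C *ᵥ q = fun _ ↦ h := by
    rw [q_eq, mulVec_mulVec, ← hB, replicateRow_add_one_mulVec_one, degree_eq]
  exact ⟨degree_eq, weights, monomialSum_add_pow_sub_prod_pow_mul weights hh⟩

lemma Bmat_eq_replicateRow_add_one (a : Fin 3 → ℕ) :
    Bmat a = replicateRow (Fin 3) a + 1 := by
  ext i j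
  simp only [Bmat, Matrix.add_apply, replicateRow_apply, Matrix.one_apply]

theorem stmt_5 (a : Fin 3 → ℕ) (ha : ∀ j, 0 < a j)
    (C D : Matrix (Fin 3) (Fin 3) ℕ)
    (hB : Bmat a = C * D) (hcol : ∀ j, (∑ i : Fin 3, D i j) = a j)
    (av : Fin 3 → ℕ) (hav : ∀ i, av i = ∑ j : Fin 3, D i j)
    (hv : ℕ) (hhv : hv = 1 + av 0 + av 1 + av 2) :
    hv = a 0 + a 1 + a 2 + 1 ∧
    (∀ i : Fin 3, (∑ j : Fin 3, C i j * av j) = hv) ∧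
    ∀ t lam x y z w : ℂ,
      fC C ![lam ^ av 0 * x, lam ^ av 1 * y, lam ^ av 2 * z] + (lam * w) ^ hv
        - t * ((lam ^ av 0 * x) * (lam ^ av 1 * y) * (lam ^ av 2 * z) * (lam * w))
      = lam ^ hv * (fC C ![x, y, z] + w ^ hv - t * (x * y * z * w)) := by
  obtain ⟨degree_eq, weights, scaling⟩ := stmt_5_general (R := ℂ)
    (Bmat_eq_replicateRow_add_one a ▸ hB) hcol hav
    (hhv.trans (by simp only [Fin.sum_univ_three, add_assoc]))
  refine ⟨by rw [degree_eq, Fin.sum_univ_three], congrFun weights, fun t lam x y z w ↦ ?_⟩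
  simpa [fC, monomialSum, Fin.sum_univ_three, Fin.prod_univ_three, mul_assoc]
    using scaling t lam ![x, y, z] w
end
end

section
/- For the weight a = (6,14,21) (the weight of the E₁₂-singularity), there exist 3×3 matrices C and D with non-negative integer entries such that |det D| = 1, B_a = C·D, (6,14,21) = (1,1,1)·D, f_C(x,y,z) = x³ + y⁷ + z² after a permutation of the variables (x,y,z), and f_C has an isolated critical point at the origin of ℂ³ (all partial derivatives of f_C vanish at 0, and there is a punctured neighborhood of 0 containing no critical point of f_C). -/
open Matrix BigOperators

noncomputable section

/-!
Everything rests on the identity `1/7 + 1/3 + 1/2 = 1 - 1/42`, whose terms over the common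
denominator `42` have numerators `a = (6, 14, 21)`. Row by row, `7`, `3` and `2` divide `B_a`, so
`B_a` factors through `C = diag(7, 3, 2)`, and the cofactor `D` is unimodular because
`det B_a = 1 + 6 + 14 + 21 = 42 = det C`. The column sums of `D` are
`1/c_j + (1/7 + 1/3 + 1/2) a_j = a_j / 42 + (41/42) a_j = a_j`. A sum of pure powers with all
exponents at least `2` is critical only at the origin, since its partial derivatives
`c_i z_i ^ (c_i - 1)` vanish only there.
-/

section SeparableSum

variable {ι 𝕜 : Type*} [Fintype ι] [NontriviallyNormedField 𝕜]

lemma hasFDerivAt_sum_comp_apply {g : ι → 𝕜 → 𝕜} {g' p : ι → 𝕜}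
    (hg : ∀ i, HasDerivAt (g i) (g' i) (p i)) :
    HasFDerivAt (fun v : ι → 𝕜 => ∑ i, g i (v i))
      (∑ i, g' i • (ContinuousLinearMap.proj i : (ι → 𝕜) →L[𝕜] 𝕜)) p :=
  HasFDerivAt.fun_sum fun i _ => (hg i).comp_hasFDerivAt p (hasFDerivAt_apply i p)

lemma sum_smul_proj_eq_zero_iff {w : ι → 𝕜} :
    ∑ i, w i • (ContinuousLinearMap.proj i : (ι → 𝕜) →L[𝕜] 𝕜) = 0 ↔ w = 0 := by
  classical
  refine ⟨fun h => funext fun i => ?_, fun h => by ext; simp [h]⟩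
  simpa [Pi.single_apply] using DFunLike.congr_fun h (Pi.single i 1)

lemma fderiv_sum_pow_eq_zero_iff [CharZero 𝕜] {c : ι → ℕ} (hc : ∀ i, 2 ≤ c i) {p : ι → 𝕜} :
    fderiv 𝕜 (fun v : ι → 𝕜 => ∑ i, v i ^ c i) p = 0 ↔ p = 0 := by
  have c_ne_zero (i : ι) : c i ≠ 0 := by have := hc i; lia
  have c_sub_one_ne_zero (i : ι) : c i - 1 ≠ 0 := by have := hc i; lia
  rw [(hasFDerivAt_sum_comp_apply fun i => hasDerivAt_pow (c i) (p i)).fderiv,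
    sum_smul_proj_eq_zero_iff]
  simp [funext_iff, c_ne_zero, c_sub_one_ne_zero]

end SeparableSum

lemma fC_diagonal (c : Fin 3 → ℕ) : fC (diagonal c) = fun v => ∑ i, v i ^ c i := by
  funext v
  simp [fC, diagonal_apply, pow_ite]

lemma isolatedCriticalAtZero_fC_diagonal {c : Fin 3 → ℕ} (hc : ∀ i, 2 ≤ c i) :
    IsolatedCriticalAtZero (fC (diagonal c)) := by
  rw [fC_diagonal]
  exact ⟨(fderiv_sum_pow_eq_zero_iff hc).2 rfl, 1, one_pos,
    fun _ hp _ => mt (fderiv_sum_pow_eq_zero_iff hc).1 hp⟩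

theorem stmt_6 :
    ∃ C D : Matrix (Fin 3) (Fin 3) ℕ,
      |detZ D| = 1 ∧
      Bmat ![6, 14, 21] = C * D ∧
      (∀ j, (∑ i : Fin 3, D i j) = ![6, 14, 21] j) ∧
      (∃ σ : Equiv.Perm (Fin 3),
        ∀ x y z : ℂ, fC C (fun i => ![x, y, z] (σ i)) = x ^ 3 + y ^ 7 + z ^ 2) ∧
      IsolatedCriticalAtZero (fC C) := by
  refine ⟨diagonal ![7, 3, 2], !![1, 2, 3; 2, 5, 7; 3, 7, 11], ?det, ?factorization, ?columnSums,
    ⟨Equiv.swap 0 1, fun x y z => ?polynomial⟩, isolatedCriticalAtZero_fC_diagonal ?exponents⟩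
  case det => simp [detZ, det_fin_three]
  case factorization => decide
  case columnSums => decide
  case polynomial =>
    have swap_two : Equiv.swap (0 : Fin 3) 1 2 = 2 := by decide
    simp [fC_diagonal, Fin.sum_univ_three, swap_two, add_comm (y ^ 7)]
  case exponents => decide
end
end

section
/- For the weight a = (4,10,15) (the weight of the E₁₃-singularity), there exist 3×3 matrices C and D with non-negative integer entries such that |det D| = 1, B_a = C·D, (4,10,15) = (1,1,1)·D, f_C(x,y,z) = x³y + y⁵ + z² after a permutation of the variables (x,y,z) (the normal form of the strange dual singularity Z₁₁), and f_C has an isolated critical point at the origin of ℂ³ (all partial derivatives of f_C vanish at 0, and there is a punctured neighborhood of 0 containing no critical point of f_C). -/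
open Matrix BigOperators

noncomputable section

/-!
Euler's identity for each monomial gives `p k * ∂ₖ f_C(p) = ∑ i, c_{ik} m_i(p)`, where `m_i` is the
`i`-th monomial of `f_C`. Hence the vector of monomials at a critical point is annihilated by `Cᵀ`,
and when `det C ≠ 0` all the monomials vanish there. For `x ^ a * y + y ^ b + z ^ c` this forces
`y = z = 0`, and then `∂f/∂y = x ^ a + b * y ^ (b - 1)` forces `x = 0`.
-/

section Derivative

variable (C : Matrix (Fin 3) (Fin 3) ℕ) (p : Fin 3 → ℂ)

lemma fderiv_fC_apply_single (k : Fin 3) :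
    fderiv ℂ (fC C) p (Pi.single k 1) =
      ∑ i, (∏ j ∈ Finset.univ.erase k, p j ^ C i j) * (C i k * p k ^ (C i k - 1)) := by
  have hpow (i j : Fin 3) := (hasFDerivAt_apply (𝕜 := ℂ) j p).pow (C i j)
  have hfC : HasFDerivAt (fC C) _ p :=
    HasFDerivAt.fun_sum fun i _ => HasFDerivAt.finsetProd fun j _ => hpow i j
  simp [hfC.fderiv, Pi.single_apply]

lemma mul_fderiv_fC_apply_single (k : Fin 3) :
    p k * fderiv ℂ (fC C) p (Pi.single k 1) = (phiD C p ᵥ* C.map (Nat.cast : ℕ → ℂ)) k := by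
  have mul_deriv_pow (n : ℕ) : n * (p k * p k ^ (n - 1)) = p k ^ n * n := by
    rcases eq_or_ne n 0 with rfl | hn
    · simp
    · rw [mul_pow_sub_one hn, mul_comm]
  calc p k * fderiv ℂ (fC C) p (Pi.single k 1)
      = ∑ i, (∏ j ∈ Finset.univ.erase k, p j ^ C i j) * p k ^ C i k * C i k := by
        simp only [fderiv_fC_apply_single, Finset.mul_sum, mul_left_comm (p k), mul_deriv_pow,
          mul_assoc]
    _ = ∑ i, phiD C p i * C i k :=
        Finset.sum_congr rfl fun i _ => by
          rw [Finset.prod_erase_mul _ (fun j => p j ^ C i j) (Finset.mem_univ k), phiD]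

lemma det_map_natCast_eq_detZ : (C.map (Nat.cast : ℕ → ℂ)).det = detZ C := by
  simp [detZ, det_fin_three]

variable {C p}

lemma phiD_eq_zero_of_fderiv_fC_eq_zero (hC : detZ C ≠ 0) (hp : fderiv ℂ (fC C) p = 0) :
    phiD C p = 0 := by
  refine eq_zero_of_vecMul_eq_zero (M := C.map (Nat.cast : ℕ → ℂ)) ?_ (funext fun k => ?_)
  · rw [det_map_natCast_eq_detZ]
    exact_mod_cast hC
  · simp [← mul_fderiv_fC_apply_single, hp]

lemma fderiv_fC_zero (hC : ∀ i, 2 ≤ ∑ j, C i j) : fderiv ℂ (fC C) 0 = 0 := by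
  suffices ∀ k, fderiv ℂ (fC C) 0 (Pi.single k 1) = 0 from
    ContinuousLinearMap.coe_injective <| LinearMap.pi_ext' fun k => LinearMap.ext_ring <| this k
  intro k
  rw [fderiv_fC_apply_single]
  refine Finset.sum_eq_zero fun i _ => ?_
  rcases eq_or_ne (C i k) 1 with hk | hk
  · obtain ⟨j, hj, hCj⟩ : ∃ j ∈ Finset.univ.erase k, C i j ≠ 0 := by
      refine Finset.exists_ne_zero_of_sum_ne_zero ?_
      have hsum := Finset.add_sum_erase Finset.univ (C i) (Finset.mem_univ k)
      have hdeg := hC i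
      lia
    have hprod : ∏ j ∈ Finset.univ.erase k, (0 : Fin 3 → ℂ) j ^ C i j = 0 :=
      Finset.prod_eq_zero hj (zero_pow hCj)
    rw [hprod, zero_mul]
  · rcases Nat.eq_zero_or_pos (C i k) with h0 | hpos
    · simp [h0]
    · simp [show C i k - 1 ≠ 0 by lia]

end Derivative

lemma IsolatedCriticalAtZero.of_fderiv_eq_zero_iff {f : (Fin 3 → ℂ) → ℂ}
    (hf : ∀ p, fderiv ℂ f p = 0 ↔ p = 0) : IsolatedCriticalAtZero f :=
  ⟨(hf 0).2 rfl, 1, one_pos, fun p hp _ => mt (hf p).1 hp⟩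

/-- The exponent matrix of the chain-type polynomial `x ^ a * y + y ^ b` with `z ^ c` added. The
row of `y ^ b` comes first because `B_a = C * D` fixes the row order for `a = (4, 10, 15)`. -/
def chainMatrix (a b c : ℕ) : Matrix (Fin 3) (Fin 3) ℕ :=
  !![0, b, 0; a, 1, 0; 0, 0, c]

namespace chainMatrix

variable (a b c : ℕ)

lemma fC_apply (x y z : ℂ) :
    fC (chainMatrix a b c) ![x, y, z] = x ^ a * y + y ^ b + z ^ c := by
  simp [fC, chainMatrix, Fin.sum_univ_three, Fin.prod_univ_three, add_comm]

lemma detZ_eq : detZ (chainMatrix a b c) = -(a * b * c) := by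
  simp [detZ, chainMatrix, det_fin_three, mul_comm]

lemma fderiv_fC_apply_single_one (p : Fin 3 → ℂ) :
    fderiv ℂ (fC (chainMatrix a b c)) p (Pi.single 1 1) = p 0 ^ a + b * p 1 ^ (b - 1) := by
  have erase_one : Finset.univ.erase (1 : Fin 3) = {0, 2} := by decide
  simp [fderiv_fC_apply_single, chainMatrix, Fin.sum_univ_three, erase_one, add_comm]

variable {a b c}

lemma eq_zero_of_fderiv_fC_eq_zero {p : Fin 3 → ℂ} (ha : a ≠ 0) (hb : 2 ≤ b) (hc : c ≠ 0)
    (hp : fderiv ℂ (fC (chainMatrix a b c)) p = 0) : p = 0 := by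
  have hb' : b ≠ 0 := by lia
  have hdet : detZ (chainMatrix a b c) ≠ 0 := by simp [detZ_eq, ha, hb', hc]
  have hmonomials := phiD_eq_zero_of_fderiv_fC_eq_zero hdet hp
  have hy : p 1 = 0 := by
    simpa [phiD, chainMatrix, Fin.prod_univ_three, hb'] using congr_fun hmonomials 0
  have hz : p 2 = 0 := by
    simpa [phiD, chainMatrix, Fin.prod_univ_three, hc] using congr_fun hmonomials 2
  have hpartial_y : p 0 ^ a + b * p 1 ^ (b - 1) = 0 := by
    simp [← fderiv_fC_apply_single_one a b c, hp]
  have hx : p 0 = 0 := by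
    simpa [hy, show b - 1 ≠ 0 by lia, ha] using hpartial_y
  ext i
  fin_cases i <;> assumption

lemma isolatedCriticalAtZero (ha : a ≠ 0) (hb : 2 ≤ b) (hc : 2 ≤ c) :
    IsolatedCriticalAtZero (fC (chainMatrix a b c)) := by
  refine .of_fderiv_eq_zero_iff fun p =>
    ⟨eq_zero_of_fderiv_fC_eq_zero ha hb (by lia), ?_⟩
  rintro rfl
  refine fderiv_fC_zero fun i => ?_
  fin_cases i <;> simp [chainMatrix, Fin.sum_univ_three, Nat.one_le_iff_ne_zero, ha, hb, hc]

end chainMatrix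

theorem stmt_7 :
    ∃ C D : Matrix (Fin 3) (Fin 3) ℕ,
      |detZ D| = 1 ∧
      Bmat ![4, 10, 15] = C * D ∧
      (∀ j, (∑ i : Fin 3, D i j) = ![4, 10, 15] j) ∧
      (∃ σ : Equiv.Perm (Fin 3),
        ∀ x y z : ℂ, fC C (fun i => ![x, y, z] (σ i)) = x ^ 3 * y + y ^ 5 + z ^ 2) ∧
      IsolatedCriticalAtZero (fC C) := by
  refine ⟨chainMatrix 3 5 2, !![1, 3, 4; 1, 2, 3; 2, 5, 8], ?det, ?factorization, ?weight,
    ⟨1, chainMatrix.fC_apply 3 5 2⟩, chainMatrix.isolatedCriticalAtZero ?_ ?_ ?_⟩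
  case det => simp [detZ, det_fin_three]
  case factorization => decide
  case weight => decide
  all_goals norm_num
end
end

section
/- For the weight a = (3,4,5) (the weight of the S₁₂-singularity), there exist 3×3 matrices C and D with non-negative integer entries such that |det D| = 1, B_a = C·D, (3,4,5) = (1,1,1)·D, f_C(x,y,z) = x³y + y²z + xz² after a permutation of the variables (x,y,z) (S₁₂ is self-dual under strange duality), and f_C has an isolated critical point at the origin of ℂ³ (all partial derivatives of f_C vanish at 0, and there is a punctured neighborhood of 0 containing no critical point of f_C). -/
open Matrix BigOperators

noncomputable section

/-!
The polynomial `f_C` is of loop type: a sum of monomials `xᵢ ^ aᵢ * x_{σ i}` for a cyclic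
permutation `σ`. At a critical point, multiplying each partial derivative by its variable gives
`a_{σ i} m_{σ i} + mᵢ = 0` for the values `mᵢ` of the monomials. Since `‖mᵢ‖ = a_{σ i} ‖m_{σ i}‖`
and `aᵢ ≥ 2`, summing the norms over `i` forces every `mᵢ` to vanish, and then the partial
derivatives themselves show that no coordinate of the point can be nonzero. Hence `0` is the only
critical point.
-/

lemma eq_zero_of_forall_mul_perm_add_eq_zero {ι K : Type*} [Finite ι] [NormedDivisionRing K]
    {σ : Equiv.Perm ι} {c m : ι → K} (hc : ∀ i, 1 < ‖c i‖)
    (hm : ∀ i, c (σ i) * m (σ i) + m i = 0) : m = 0 := by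
  cases nonempty_fintype ι
  have norm_eq (i : ι) : ‖m i‖ = ‖c (σ i)‖ * ‖m (σ i)‖ := by
    rw [← norm_mul, eq_neg_of_add_eq_zero_right (hm i), norm_neg]
  have sum_eq : ∑ i, ‖m i‖ = ∑ i, ‖c i‖ * ‖m i‖ :=
    (Finset.sum_congr rfl fun i _ => norm_eq i).trans
      (Equiv.sum_comp σ fun i => ‖c i‖ * ‖m i‖)
  have le_mul (i : ι) : ‖m i‖ ≤ ‖c i‖ * ‖m i‖ :=
    le_mul_of_one_le_left (norm_nonneg _) (hc i).le
  have eq_mul := (Finset.sum_eq_sum_iff_of_le fun i _ => le_mul i).1 sum_eq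
  funext i
  by_contra hi
  exact (lt_mul_of_one_lt_left (norm_pos_iff.2 hi) (hc i)).ne (eq_mul i (Finset.mem_univ i))

section LoopPolynomial

variable {ι : Type*} [Fintype ι]

/-- The polynomial function `v ↦ ∑ i, v i ^ a i * v (σ i)`. It is a polynomial of loop type when
`σ` is a cycle; a general permutation gives a sum of such polynomials in disjoint sets of variables,
a fixed point of `σ` contributing `v i ^ (a i + 1)`. -/
def loopPolynomial {R : Type*} [CommSemiring R] (a : ι → ℕ) (σ : Equiv.Perm ι) (v : ι → R) : R :=
  ∑ i, v i ^ a i * v (σ i)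

lemma prod_pow_diagonal_add_permMatrix [DecidableEq ι] {M : Type*} [CommMonoid M]
    (a : ι → ℕ) (σ : Equiv.Perm ι) (v : ι → M) (i : ι) :
    ∏ j, v j ^ (diagonal a + σ.permMatrix ℕ) i j = v i ^ a i * v (σ i) := by
  simp only [Matrix.add_apply, pow_add, Finset.prod_mul_distrib]
  simp [diagonal_apply, PEquiv.toMatrix_apply, pow_ite]

lemma fC_diagonal_add_permMatrix (a : Fin 3 → ℕ) (σ : Equiv.Perm (Fin 3)) :
    fC (diagonal a + σ.permMatrix ℕ) = loopPolynomial a σ :=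
  funext fun v => Finset.sum_congr rfl fun i _ => prod_pow_diagonal_add_permMatrix a σ v i

section Derivative

variable {𝕜 : Type*} [NontriviallyNormedField 𝕜] (a : ι → ℕ) (σ : Equiv.Perm ι) (p : ι → 𝕜)

lemma fderiv_loopPolynomial_apply (w : ι → 𝕜) :
    fderiv 𝕜 (loopPolynomial a σ) p w =
      ∑ i, (a i * p i ^ (a i - 1) * p (σ i) * w i + p i ^ a i * w (σ i)) := by
  have hasFDerivAt_coord (i : ι) := hasFDerivAt_apply (𝕜 := 𝕜) i p
  have hasFDerivAt_loopPolynomial := HasFDerivAt.fun_sum fun i (_ : i ∈ Finset.univ) =>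
    ((hasFDerivAt_coord i).pow (a i)).mul (hasFDerivAt_coord (σ i))
  refine (congrArg (· w) hasFDerivAt_loopPolynomial.fderiv).trans ?_
  rw [_root_.sum_apply]
  refine Finset.sum_congr rfl fun i _ => ?_
  simp only [nsmul_eq_mul, _root_.add_apply, _root_.smul_apply, ContinuousLinearMap.proj_apply,
    smul_eq_mul]
  ring

lemma fderiv_loopPolynomial_apply_single [DecidableEq ι] (i : ι) :
    fderiv 𝕜 (loopPolynomial a σ) p (Pi.single (σ i) 1) =
      a (σ i) * p (σ i) ^ (a (σ i) - 1) * p (σ (σ i)) + p i ^ a i := by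
  simp [fderiv_loopPolynomial_apply, Finset.sum_add_distrib, Pi.single_apply]

end Derivative

variable {𝕜 : Type*} [RCLike 𝕜] {a : ι → ℕ} {σ : Equiv.Perm ι} {p : ι → 𝕜}

lemma monomial_eq_zero_of_fderiv_loopPolynomial_eq_zero (ha : ∀ i, 2 ≤ a i)
    (hp : fderiv 𝕜 (loopPolynomial a σ) p = 0) (i : ι) : p i ^ a i * p (σ i) = 0 := by
  classical
  have one_lt_norm (i : ι) : 1 < ‖(a i : 𝕜)‖ := by
    rw [RCLike.norm_natCast]
    exact_mod_cast ha i
  refine congrFun (eq_zero_of_forall_mul_perm_add_eq_zero (σ := σ)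
    (m := fun i => p i ^ a i * p (σ i)) one_lt_norm fun i => ?_) i
  have partial_eq_zero := fderiv_loopPolynomial_apply_single a σ p i
  rw [hp, _root_.zero_apply] at partial_eq_zero
  have pow_eq : p (σ i) ^ a (σ i) = p (σ i) ^ (a (σ i) - 1) * p (σ i) :=
    (pow_sub_one_mul (by have := ha (σ i); lia) _).symm
  linear_combination a (σ i) * p (σ (σ i)) * pow_eq - p (σ i) * partial_eq_zero

theorem fderiv_loopPolynomial_eq_zero_iff (ha : ∀ i, 2 ≤ a i) :
    fderiv 𝕜 (loopPolynomial a σ) p = 0 ↔ p = 0 := by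
  classical
  have exponent_ne_zero (i : ι) : a i ≠ 0 := by have := ha i; lia
  have pred_exponent_ne_zero (i : ι) : a i - 1 ≠ 0 := by have := ha i; lia
  refine ⟨fun hp => funext fun i => ?_, ?_⟩
  · by_contra hi
    have next_eq_zero : p (σ i) = 0 :=
      (mul_eq_zero.1 (monomial_eq_zero_of_fderiv_loopPolynomial_eq_zero ha hp i)).resolve_left
        (pow_ne_zero _ hi)
    have partial_eq := fderiv_loopPolynomial_apply_single a σ p i
    rw [hp, next_eq_zero, zero_pow (pred_exponent_ne_zero _)] at partial_eq
    exact hi (pow_eq_zero_iff (exponent_ne_zero i) |>.1 (by simpa using partial_eq.symm))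
  · rintro rfl
    ext w
    simp [fderiv_loopPolynomial_apply, exponent_ne_zero]

end LoopPolynomial

theorem stmt_14 :
    ∃ C D : Matrix (Fin 3) (Fin 3) ℕ,
      |detZ D| = 1 ∧
      Bmat ![3, 4, 5] = C * D ∧
      (∀ j, (∑ i : Fin 3, D i j) = ![3, 4, 5] j) ∧
      (∃ σ : Equiv.Perm (Fin 3),
        ∀ x y z : ℂ, fC C (fun i => ![x, y, z] (σ i)) = x ^ 3 * y + y ^ 2 * z + x * z ^ 2) ∧
      IsolatedCriticalAtZero (fC C) := by
  have loop_exponents : !![3, 0, 1; 1, 2, 0; 0, 1, 2] =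
      diagonal ![3, 2, 2] + (finRotate 3)⁻¹.permMatrix ℕ := by decide
  refine ⟨!![3, 0, 1; 1, 2, 0; 0, 1, 2], !![1, 1, 1; 1, 2, 2; 1, 1, 2], ?_, ?_, ?_,
    ⟨Equiv.swap 1 2, fun x y z => ?_⟩, ?_⟩
  · simp [detZ, det_fin_three]
  · decide
  · decide
  · rw [loop_exponents, fC_diagonal_add_permMatrix, loopPolynomial, Fin.sum_univ_three]
    change x ^ 3 * y + z ^ 2 * x + y ^ 2 * z = _
    ring
  · rw [loop_exponents, fC_diagonal_add_permMatrix]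
    exact .of_fderiv_eq_zero_iff fun p => fderiv_loopPolynomial_eq_zero_iff (by decide)
end
end

section
/- For the weight a = (6,8,9) (the weight of the Q₁₀-singularity), there exist 3×3 matrices C and D with non-negative integer entries such that |det D| = 1, B_a = C·D, (6,8,9) = (1,1,1)·D, and f_C has an isolated critical point at the origin of ℂ³ (all partial derivatives of f_C vanish at 0, and there is a punctured neighborhood of 0 containing no critical point of f_C); moreover any such C satisfies |det C| = 24. -/
open Matrix BigOperators

noncomputable section

/-!
Since `B_a = 1 + 𝟙 aᵀ`, the matrix determinant lemma gives `det B_a = 1 + a₁ + a₂ + a₃`, so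
`B_a = C D` with `|det D| = 1` determines `|det C|`.

Given `𝟙ᵀ D = aᵀ`, the factorization `B_a = C D` says `(C - 𝟙 𝟙ᵀ) D = 1`. For the exponent matrix `C`
of the normal form `x⁴z + y³ + z²` of `Q₁₀`, the matrix `C - 𝟙 𝟙ᵀ` is unimodular and its inverse `D`
has column sums `(6, 8, 9)`.
-/

lemma detZ_mul (C D : Matrix (Fin 3) (Fin 3) ℕ) : detZ (C * D) = detZ C * detZ D := by
  rw [detZ, ← Nat.coe_castRingHom, Matrix.map_mul, Matrix.det_mul]
  rfl

lemma map_cast_Bmat (a : Fin 3 → ℕ) :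
    (Bmat a).map (fun n : ℕ => (n : ℤ)) = 1 + vecMulVec 1 (fun j => (a j : ℤ)) := by
  ext i j
  simp [Bmat, Matrix.one_apply, add_comm]

lemma detZ_Bmat (a : Fin 3 → ℕ) : detZ (Bmat a) = 1 + ∑ j, (a j : ℤ) := by
  rw [detZ, map_cast_Bmat, vecMulVec_eq Unit,
    det_one_add_replicateCol_mul_replicateRow, dotProduct_one]

lemma abs_detZ_of_Bmat_eq_mul {a : Fin 3 → ℕ} {C D : Matrix (Fin 3) (Fin 3) ℕ}
    (hD : |detZ D| = 1) (hB : Bmat a = C * D) :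
    |detZ C| = 1 + ∑ j, (a j : ℤ) :=
  calc |detZ C| = |detZ C * detZ D| := by rw [abs_mul, hD, mul_one]
    _ = |1 + ∑ j, (a j : ℤ)| := by rw [← detZ_mul, ← hB, detZ_Bmat]
    _ = 1 + ∑ j, (a j : ℤ) := abs_of_nonneg (by positivity)

lemma hasFDerivAt_prod_pow {𝕜 ι : Type*} [NontriviallyNormedField 𝕜] [Fintype ι] [DecidableEq ι]
    (c : ι → ℕ) (p : ι → 𝕜) :
    HasFDerivAt (fun v : ι → 𝕜 => ∏ k, v k ^ c k)
      (∑ j, (c j * ∏ k, p k ^ (c k - if k = j then 1 else 0)) •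
        (ContinuousLinearMap.proj j : (ι → 𝕜) →L[𝕜] 𝕜)) p := by
  have factor (j : ι) : HasFDerivAt (fun v : ι → 𝕜 => v j ^ c j)
      ((c j * p j ^ (c j - 1)) • (ContinuousLinearMap.proj j : (ι → 𝕜) →L[𝕜] 𝕜)) p := by
    simpa using (hasFDerivAt_apply (𝕜 := 𝕜) j p).pow (c j)
  have split (j : ι) : ∏ k, p k ^ (c k - if k = j then 1 else 0) =
      (∏ k ∈ Finset.univ.erase j, p k ^ c k) * p j ^ (c j - 1) := by
    rw [← Finset.prod_erase_mul _ _ (Finset.mem_univ j), if_pos rfl]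
    congr 1
    refine Finset.prod_congr rfl fun k hk => ?_
    rw [if_neg (Finset.ne_of_mem_erase hk), Nat.sub_zero]
  refine (HasFDerivAt.finsetProd (u := Finset.univ) fun j _ => factor j).congr_fderiv ?_
  ext v
  simp [split, mul_assoc, mul_left_comm]

/-- The formal partial derivative of `f_C` with respect to the `j`-th variable, used to describe
the critical points of `f_C`. Where `C i j = 0` the truncated subtraction is harmless, because the
coefficient vanishes. -/
def fCPartial (C : Matrix (Fin 3) (Fin 3) ℕ) (j : Fin 3) (p : Fin 3 → ℂ) : ℂ :=
  ∑ i, C i j * ∏ k, p k ^ (C i k - if k = j then 1 else 0)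

lemma hasFDerivAt_fC (C : Matrix (Fin 3) (Fin 3) ℕ) (p : Fin 3 → ℂ) :
    HasFDerivAt (fC C)
      (∑ j, fCPartial C j p • (ContinuousLinearMap.proj j : (Fin 3 → ℂ) →L[ℂ] ℂ)) p := by
  have terms := HasFDerivAt.fun_sum (u := Finset.univ) fun i _ => hasFDerivAt_prod_pow (C i) p
  refine terms.congr_fderiv (ContinuousLinearMap.ext fun v => ?_)
  simpa [fCPartial, Finset.sum_mul] using Finset.sum_comm

lemma fderiv_fC_eq_zero_iff {C : Matrix (Fin 3) (Fin 3) ℕ} {p : Fin 3 → ℂ} :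
    fderiv ℂ (fC C) p = 0 ↔ ∀ j, fCPartial C j p = 0 := by
  rw [(hasFDerivAt_fC C p).fderiv]
  refine ⟨fun h j => ?_, fun h => ?_⟩
  · simpa [Pi.single_apply] using DFunLike.congr_fun h (Pi.single j 1)
  · ext v
    simp [h]

lemma isolatedCriticalAtZero_of_fderiv_eq_zero_iff {f : (Fin 3 → ℂ) → ℂ}
    (h : ∀ p, fderiv ℂ f p = 0 ↔ p = 0) : IsolatedCriticalAtZero f :=
  ⟨(h 0).2 rfl, 1, one_pos, fun p hp _ => mt (h p).1 hp⟩

lemma fderiv_fC_chain_add_fermat_eq_zero_iff {m n k : ℕ} (hm : m ≠ 0) (hn : 2 ≤ n) (hk : 2 ≤ k)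
    {p : Fin 3 → ℂ} :
    fderiv ℂ (fC !![m, 0, 1; 0, n, 0; 0, 0, k]) p = 0 ↔ p = 0 := by
  have hn₀ : n ≠ 0 := by lia
  have hn₁ : n - 1 ≠ 0 := by lia
  have hk₀ : k ≠ 0 := by lia
  have hk₁ : k - 1 ≠ 0 := by lia
  have partials : fderiv ℂ (fC !![m, 0, 1; 0, n, 0; 0, 0, k]) p = 0 ↔
      m * (p 0 ^ (m - 1) * p 2) = 0 ∧ n * p 1 ^ (n - 1) = 0 ∧
        p 0 ^ m + k * p 2 ^ (k - 1) = 0 := by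
    simp [fderiv_fC_eq_zero_iff, Fin.forall_fin_succ, fCPartial, Fin.sum_univ_three,
      Fin.prod_univ_three]
  rw [partials]
  constructor
  · rintro ⟨hx, hy, hz⟩
    have y_eq : p 1 = 0 := by simpa [hn₀, hn₁] using hy
    have z_eq : p 2 = 0 := by
      by_contra hz₀
      have x_pow : p 0 ^ (m - 1) = 0 := by simpa [hm, hz₀] using hx
      have x_eq : p 0 = 0 := eq_zero_of_pow_eq_zero x_pow
      have z_pow : p 2 ^ (k - 1) = 0 := by simpa [x_eq, hm, hk₀] using hz
      exact hz₀ (eq_zero_of_pow_eq_zero z_pow)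
    have x_eq : p 0 = 0 := by simpa [z_eq, hk₁, hm] using hz
    ext i
    fin_cases i <;> assumption
  · rintro rfl
    simp [hm, hn₁, hk₁]

lemma isolatedCriticalAtZero_fC_chain_add_fermat {m n k : ℕ} (hm : m ≠ 0) (hn : 2 ≤ n)
    (hk : 2 ≤ k) : IsolatedCriticalAtZero (fC !![m, 0, 1; 0, n, 0; 0, 0, k]) :=
  isolatedCriticalAtZero_of_fderiv_eq_zero_iff fun _ =>
    fderiv_fC_chain_add_fermat_eq_zero_iff hm hn hk

theorem stmt_15_general :
    (∃ C D : Matrix (Fin 3) (Fin 3) ℕ,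
      |detZ D| = 1 ∧
      Bmat ![6, 8, 9] = C * D ∧
      (∀ j, (∑ i : Fin 3, D i j) = ![6, 8, 9] j) ∧
      IsolatedCriticalAtZero (fC C)) ∧
    (∀ (a : Fin 3 → ℕ) (C D : Matrix (Fin 3) (Fin 3) ℕ),
      |detZ D| = 1 → Bmat a = C * D → |detZ C| = 1 + ∑ j, (a j : ℤ)) := by
  refine ⟨⟨!![4, 0, 1; 0, 3, 0; 0, 0, 2], !![1, 1, 1; 2, 3, 3; 3, 4, 5], ?_, ?_, ?_, ?_⟩,
    fun _ _ _ => abs_detZ_of_Bmat_eq_mul⟩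
  · simp [detZ, Matrix.det_fin_three]
  · decide
  · decide
  · exact isolatedCriticalAtZero_fC_chain_add_fermat (by simp) (by simp) le_rfl

theorem stmt_15 :
    (∃ C D : Matrix (Fin 3) (Fin 3) ℕ,
      |detZ D| = 1 ∧
      Bmat ![6, 8, 9] = C * D ∧
      (∀ j, (∑ i : Fin 3, D i j) = ![6, 8, 9] j) ∧
      IsolatedCriticalAtZero (fC C)) ∧
    (∀ C D : Matrix (Fin 3) (Fin 3) ℕ,
      |detZ D| = 1 →
      Bmat ![6, 8, 9] = C * D →
      (∀ j, (∑ i : Fin 3, D i j) = ![6, 8, 9] j) →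
      IsolatedCriticalAtZero (fC C) →
      |detZ C| = 24) :=
  ⟨stmt_15_general.1, fun C D hD hB _ _ => by
    simpa [Fin.sum_univ_three] using stmt_15_general.2 _ C D hD hB⟩
end
end
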